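/- Let X be an irreducible scheme of finite type over Spec ℤ such that some point of X has residue field of characteristic zero (i.e., the generic fiber X_ℚ is nonempty). Then the set of points x of X whose residue field is a finite field of prime cardinality (i.e., isomorphic to 𝔽_p for some prime p) is dense in the underlying topological space of X. -/

import Mathlib

open AlgebraicGeometry CategoryTheory

/-!
An affine open `U` containing a point of residue characteristic zero has a coordinate ring `A` that
is finitely generated over `ℤ` with `ℚ ⊗ A ≠ 0`. A maximal ideal of `ℚ ⊗ A` gives a homomorphism
from `A` to a number field `ℚ(α)` with `α` integral, and the image lies in `ℤ[α, 1/N]` for some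
`N ≠ 0`. By an argument of Schur the minimal polynomial of `α` has a root modulo some prime `p ∤ N`.
Sending `α` to this root maps `ℤ[α, 1/N]`, hence `A`, to `𝔽_p`, so `U` contains a point with residue
field `𝔽_p`.
-/

universe u

section Arithmetic

open Polynomial TensorProduct

theorem infinite_image_eval {R : Type*} [CommRing R] [IsDomain R] {f : R[X]}
    (hf : 0 < f.natDegree) {s : Set R} (hs : s.Infinite) : ((f.eval ·) '' s).Infinite := by
  have finite_fiber (c : R) : ((f.eval ·) ⁻¹' {c}).Finite := by
    have hfc : f - C c ≠ 0 := fun h => by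
      rw [sub_eq_zero.mp h, natDegree_C] at hf
      exact hf.false
    refine (finite_setOfPred_isRoot hfc).subset fun x hx => ?_
    simpa [sub_eq_zero] using hx
  exact fun himage => hs <|
    (himage.preimage' fun c _ => finite_fiber c).subset (Set.subset_preimage_image _ s)

theorem exists_prime_not_dvd_and_dvd_eval {f : ℤ[X]} (hf : 0 < f.natDegree) {N : ℤ} (hN : N ≠ 0) :
    ∃ p : ℕ, p.Prime ∧ ¬ (p : ℤ) ∣ N ∧ ∃ a : ℤ, (p : ℤ) ∣ f.eval a := by
  -- With `c = f(b) ≠ 0`, the values of `f` on the progression `b + N c ℤ` have the form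
  -- `c (1 + N t)`, and infinitely many values occur, so `1 + N t` is not always `± 1`.
  obtain ⟨_, ⟨b, -, rfl⟩, hc : f.eval b ≠ 0⟩ :=
    (infinite_image_eval hf Set.infinite_univ).exists_notMem_finite (Set.finite_singleton 0)
  set c := f.eval b
  have hprogression : (Set.range fun m : ℤ => b + N * c * m).Infinite :=
    Set.infinite_range_of_injective fun m m' h => by simpa [hN, hc] using h
  obtain ⟨_, ⟨_, ⟨m, rfl⟩, rfl⟩, hm⟩ :=
    (infinite_image_eval hf hprogression).exists_notMem_finite (Set.toFinite {c, -c})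
  obtain ⟨k, hk⟩ := sub_dvd_eval_sub (b + N * c * m) b f
  have heval : f.eval (b + N * c * m) = c * (1 + N * (m * k)) := by
    linear_combination hk
  have hnonunit : (1 + N * (m * k)).natAbs ≠ 1 := fun h => by
    rcases Int.natAbs_eq_iff.mp h with h | h <;> simp [heval, h] at hm
  obtain ⟨p, hp, hdvd⟩ := Nat.exists_prime_and_dvd hnonunit
  replace hdvd : (p : ℤ) ∣ 1 + N * (m * k) := Int.natCast_dvd.mpr hdvd
  refine ⟨p, hp, fun hpN => ?_, _, heval ▸ hdvd.mul_left c⟩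
  exact (Nat.prime_iff_prime_int.mp hp).not_dvd_one
    ((Int.dvd_add_left (hpN.mul_right _)).mp hdvd)

theorem exists_isIntegral_adjoin_eq_top (R F K : Type*) [CommRing R] [Field F]
    [Algebra R F] [IsFractionRing R F] [Field K] [Algebra R K] [Algebra F K] [IsScalarTower R F K]
    [FiniteDimensional F K] [Algebra.IsSeparable F K] :
    ∃ α : K, IsIntegral R α ∧ Algebra.adjoin F {α} = ⊤ := by
  obtain ⟨β, hβ⟩ := Field.exists_primitive_element F K
  have hβint : IsIntegral F β := Algebra.IsIntegral.isIntegral β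
  have hβtop : Algebra.adjoin F {β} = ⊤ := by
    rw [← IntermediateField.adjoin_simple_toSubalgebra_of_isAlgebraic hβint.isAlgebraic, hβ,
      IntermediateField.top_toSubalgebra]
  obtain ⟨r, hr⟩ := hβint.exists_multiple_integral_of_isLocalization (nonZeroDivisors R)
  refine ⟨(r : R) • β, hr, ?_⟩
  rw [← algebraMap_smul F (r : R) β]
  have hr0 : algebraMap R F r ≠ 0 := (IsLocalization.map_units F r).ne_zero
  have hβmem := Subalgebra.smul_mem _
    (Algebra.self_mem_adjoin_singleton F (algebraMap R F r • β)) (algebraMap R F r)⁻¹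
  rw [inv_smul_smul₀ hr0] at hβmem
  rw [← top_le_iff, ← hβtop]
  exact Algebra.adjoin_le (Set.singleton_subset_iff.mpr hβmem)

theorem nonempty_ringHom_of_mul_mem {A K k : Type*} [CommRing A] [Field K] [Field k]
    {S : Subring K} (φ : S →+* k) (ψ : A →+* K) {s : Set A} (hs : Algebra.adjoin ℤ s = ⊤)
    (hden : ∀ a ∈ s, ∃ d : S, φ d ≠ 0 ∧ d * ψ a ∈ S) : Nonempty (A →+* k) := by
  -- `φ` extends to the localization `B` of `S` at its kernel, and `ψ` takes values in `B`.
  let P := RingHom.ker φ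
  have : P.IsPrime := RingHom.ker_isPrime φ
  let B := (LocalSubring.ofPrime S P).toSubring
  have hgen : ∀ a ∈ s, ψ a ∈ B := by
    intro a ha
    obtain ⟨d, hd, hmem⟩ := hden a ha
    let n : S := ⟨d * ψ a, hmem⟩
    let q : B := IsLocalization.mk' B n (⟨d, hd⟩ : P.primeCompl)
    have hq : (d : K) * q = d * ψ a :=
      congrArg Subtype.val (IsLocalization.mk'_spec' B n (⟨d, hd⟩ : P.primeCompl))
    have hd0 : (d : K) ≠ 0 := fun h => hd (by rw [ZeroMemClass.coe_eq_zero.mp h, map_zero])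
    exact mul_left_cancel₀ hd0 hq ▸ q.2
  have hrange : ∀ a, ψ a ∈ B := by
    have : Algebra.adjoin ℤ s ≤ (subalgebraOfSubring B).comap ψ.toIntAlgHom :=
      Algebra.adjoin_le hgen
    exact fun a => this (hs ▸ Algebra.mem_top)
  let reduction : B →+* k := IsLocalization.lift (M := P.primeCompl) (g := φ)
    fun d => isUnit_iff_ne_zero.mpr d.2
  exact ⟨reduction.comp (ψ.codRestrict B hrange)⟩

theorem exists_prime_not_dvd_and_nonempty_adjoin_ringHom_zmod {K : Type*} [CommRing K] [IsDomain K]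
    [CharZero K] {α : K} (hα : IsIntegral ℤ α) {N : ℤ} (hN : N ≠ 0) :
    ∃ p : ℕ, p.Prime ∧ ¬ (p : ℤ) ∣ N ∧ Nonempty (Algebra.adjoin ℤ {α} →+* ZMod p) := by
  obtain ⟨p, hp, hpN, a, ha⟩ := exists_prime_not_dvd_and_dvd_eval (minpoly.natDegree_pos hα) hN
  have hroot : aeval (a : ZMod p) (minpoly ℤ α) = 0 := by
    rw [← eq_intCast (algebraMap ℤ (ZMod p)) a, aeval_algebraMap_apply, coe_aeval_eq_eval]
    exact (ZMod.intCast_zmod_eq_zero_iff_dvd _ _).mpr ha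
  rw [Algebra.adjoin.powerBasis'_minpoly_gen hα] at hroot
  exact ⟨p, hp, hpN, ⟨((Algebra.adjoin.powerBasis' hα).lift (a : ZMod p) hroot).toRingHom⟩⟩

theorem exists_ringHom_zmod_of_numberField {A K : Type*} [CommRing A] [Algebra.FiniteType ℤ A]
    [Field K] [NumberField K] (ψ : A →+* K) :
    ∃ p : ℕ, p.Prime ∧ Nonempty (A →+* ZMod p) := by
  obtain ⟨α, hα, htop⟩ := exists_isIntegral_adjoin_eq_top ℤ ℚ K
  have hden (x : K) : ∃ n : nonZeroDivisors ℤ, n • x ∈ Algebra.adjoin ℤ {α} :=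
    multiple_mem_adjoin_of_mem_localization_adjoin _ ℚ {α} x (htop ▸ Algebra.mem_top)
  choose n hn using hden
  obtain ⟨s, hs⟩ := Algebra.FiniteType.out (R := ℤ) (A := A)
  have hN : ∏ a ∈ s, (n (ψ a) : ℤ) ≠ 0 :=
    Finset.prod_ne_zero_iff.mpr fun a _ => nonZeroDivisors.ne_zero (n (ψ a)).2
  obtain ⟨p, hp, hpN, ⟨φ⟩⟩ := exists_prime_not_dvd_and_nonempty_adjoin_ringHom_zmod hα hN
  have : Fact p.Prime := ⟨hp⟩
  refine ⟨p, hp, nonempty_ringHom_of_mul_mem (S := (Algebra.adjoin ℤ {α}).toSubring) φ ψ hs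
    fun a ha => ⟨((n (ψ a) : ℤ) : Algebra.adjoin ℤ {α}), ?_, ?_⟩⟩
  · rw [map_intCast, Ne, ZMod.intCast_zmod_eq_zero_iff_dvd]
    exact fun hpn => hpN (hpn.trans (Finset.dvd_prod_of_mem _ ha))
  · simpa [Submonoid.smul_def] using hn (ψ a)

theorem exists_numberField_ringHom {A : Type u} {F : Type*} [CommRing A] [Algebra.FiniteType ℤ A]
    [CommRing F] [Nontrivial F] [Algebra ℚ F] (g : A →+* F) :
    ∃ (K : Type u) (_ : Field K) (_ : NumberField K), Nonempty (A →+* K) := by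
  let G : ℚ ⊗[ℤ] A →ₐ[ℤ] F := Algebra.TensorProduct.lift (algebraMap ℚ F).toIntAlgHom
    g.toIntAlgHom fun _ _ => mul_comm _ _
  have : Nontrivial (ℚ ⊗[ℤ] A) := G.toRingHom.domain_nontrivial
  obtain ⟨M, hM⟩ := Ideal.exists_maximal (ℚ ⊗[ℤ] A)
  let : Field ((ℚ ⊗[ℤ] A) ⧸ M) := Ideal.Quotient.field M
  have hfinite : Module.Finite ℚ ((ℚ ⊗[ℤ] A) ⧸ M) := finite_of_finite_type_of_isJacobsonRing _ _
  have : CharZero ((ℚ ⊗[ℤ] A) ⧸ M) := algebraRat.charZero _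
  -- The `ℚ`-algebra structures coming from the quotient and from characteristic zero agree only
  -- propositionally.
  have : NumberField ((ℚ ⊗[ℤ] A) ⧸ M) :=
    { to_finiteDimensional := by
        convert hfinite
        exact Subsingleton.elim _ _ }
  exact ⟨(ℚ ⊗[ℤ] A) ⧸ M, inferInstance, inferInstance,
    ⟨(Ideal.Quotient.mk M).comp (Algebra.TensorProduct.includeRight (R := ℤ) (A := ℚ)).toRingHom⟩⟩

theorem exists_ringHom_zmod {A F : Type*} [CommRing A] [Algebra.FiniteType ℤ A]
    [CommRing F] [Nontrivial F] [Algebra ℚ F] (g : A →+* F) :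
    ∃ p : ℕ, p.Prime ∧ Nonempty (A →+* ZMod p) := by
  obtain ⟨K, _, _, ⟨ψ⟩⟩ := exists_numberField_ringHom g
  exact exists_ringHom_zmod_of_numberField ψ

end Arithmetic

theorem charZero_residueField_of_specializes {X : Scheme} {x y : X} (hxy : x ⤳ y)
    [CharZero (X.residueField y)] : CharZero (X.residueField x) := by
  refine charZero_of_inj_zero fun n hn => of_not_not fun hn0 => ?_
  have hy : y ∈ X.basicOpen (n : Γ(X, ⊤)) := by
    rw [← X.evaluation_ne_zero_iff_mem_basicOpen y (TopologicalSpace.Opens.mem_top y), map_natCast]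
    exact Nat.cast_ne_zero.mpr hn0
  have hx : x ∈ X.basicOpen (n : Γ(X, ⊤)) := hxy.mem_open (X.basicOpen _).2 hy
  rw [← X.evaluation_ne_zero_iff_mem_basicOpen x (TopologicalSpace.Opens.mem_top x), map_natCast]
    at hx
  exact hx hn

theorem dense_charZero_residueField {X : Scheme} [IrreducibleSpace X] (x₀ : X)
    [CharZero (X.residueField x₀)] : Dense {x : X | CharZero (X.residueField x)} :=
  (dense_iff_closure_eq.mpr (genericPoint_spec X)).mono <| Set.singleton_subset_iff.mpr <|
    charZero_residueField_of_specializes (genericPoint_specializes x₀)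

theorem finiteType_int_of_isAffineOpen {X : Scheme} (sX : X ⟶ Spec (CommRingCat.of ℤ))
    [LocallyOfFiniteType sX] {U : X.Opens} (hU : IsAffineOpen U) :
    Algebra.FiniteType ℤ Γ(X, U) := by
  have happLE : (sX.appLE ⊤ U le_top).hom.FiniteType :=
    sX.finiteType_appLE (isAffineOpen_top _) hU _
  have hiso : (Scheme.ΓSpecIso (CommRingCat.of ℤ)).inv.hom.FiniteType :=
    RingHom.FiniteType.of_surjective _ (ConcreteCategory.bijective_of_isIso _).2
  rw [← RingHom.finiteType_algebraMap]
  convert happLE.comp hiso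
  exact Subsingleton.elim _ _

theorem exists_mem_and_nonempty_residueField_ringHom {X : Scheme.{u}} {U : X.Opens}
    (hU : IsAffineOpen U) {K : Type u} [Field K] (g : Γ(X, U) →+* K) :
    ∃ x ∈ U, Nonempty (X.residueField x →+* K) := by
  let f : Spec (.of K) ⟶ X := Spec.map (CommRingCat.ofHom g) ≫ hU.fromSpec
  refine ⟨f (IsLocalRing.closedPoint K), ?_, ⟨(Scheme.SpecToEquivOfField K X f).2.hom⟩⟩
  rw [← SetLike.mem_coe, ← hU.range_fromSpec]
  exact ⟨Spec.map (CommRingCat.ofHom g) _, rfl⟩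

theorem mem_closure_primeField_points {X : Scheme} (sX : X ⟶ Spec (CommRingCat.of ℤ))
    [LocallyOfFiniteType sX] (x : X) [CharZero (X.residueField x)] :
    x ∈ closure {y : X | ∃ p : ℕ, p.Prime ∧ Nonempty (X.residueField y ≃+* ZMod p)} := by
  rw [X.isBasis_affineOpens.mem_closure_iff]
  rintro _ ⟨U, hU, rfl⟩ hxU
  have := finiteType_int_of_isAffineOpen sX hU
  obtain ⟨p, hp, ⟨g⟩⟩ := exists_ringHom_zmod (X.evaluation U x hxU).hom
  have : Fact p.Prime := ⟨hp⟩
  obtain ⟨y, hyU, ⟨i⟩⟩ := exists_mem_and_nonempty_residueField_ringHom hU g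
  exact ⟨y, hyU, p, hp, ⟨.ofBijective i ⟨i.injective, ZMod.ringHom_surjective i⟩⟩⟩

theorem dense_primeField_points_general
    (X : Scheme) (sX : X ⟶ Spec (CommRingCat.of ℤ)) [LocallyOfFiniteType sX]
    (hX : Dense {x : X | CharZero (X.residueField x)}) :
    Dense {x : X | ∃ p : ℕ, p.Prime ∧ Nonempty (X.residueField x ≃+* ZMod p)} :=
  (hX.mono fun x (_ : CharZero _) => mem_closure_primeField_points sX x).of_closure

/-- Let `X` be an irreducible scheme of finite type over `Spec ℤ` such that
some point of `X` has residue field of characteristic zero. Then the set of points of `X`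
whose residue field is isomorphic to `𝔽_p` for some prime `p` is dense in `X`. -/
theorem dense_primeField_points
    (X : Scheme) [IrreducibleSpace X]
    (sX : X ⟶ Spec (CommRingCat.of ℤ)) [LocallyOfFiniteType sX] [QuasiCompact sX]
    (x₀ : X) (hx₀ : CharZero (X.residueField x₀)) :
    Dense {x : X | ∃ p : ℕ, p.Prime ∧ Nonempty (X.residueField x ≃+* ZMod p)} :=
  dense_primeField_points_general X sX (dense_charZero_residueField x₀)
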